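/- For each integer p ≥ 1, the set of (a,v) ∈ S_p for which F_{a,v} has a parabolic cycle — that is, there exist z ∈ ℂ and an integer n ≥ 1 with F_{a,v}^{∘n}(z) = z and such that the complex derivative (F_{a,v}^{∘n})′(z) is a root of unity — is countable. -/

import Mathlib

open Function Set

/-- The monic centered cubic polynomial `F_{a,v}(z) = z³ − 3a²z + (2a³ + v)`. -/
noncomputable def Fav (a v : ℂ) : ℂ → ℂ := fun z => z ^ 3 - 3 * a ^ 2 * z + (2 * a ^ 3 + v)

/-- `z` has exact period `p ≥ 1` under `F`. -/
def HasExactPeriod (F : ℂ → ℂ) (z : ℂ) (p : ℕ) : Prop :=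
  F^[p] z = z ∧ ∀ j, 0 < j → j < p → F^[j] z ≠ z

/-- The parameter curve `S_p`. -/
noncomputable def Sper (p : ℕ) : Set (ℂ × ℂ) :=
  {w | HasExactPeriod (Fav w.1 w.2) w.1 p}

/-- `F` has a parabolic cycle: a periodic point whose multiplier is a root of unity. -/
noncomputable def HasParabolicCycle (F : ℂ → ℂ) : Prop :=
  ∃ (z : ℂ) (n : ℕ), 1 ≤ n ∧ F^[n] z = z ∧
    ∃ m : ℕ, 1 ≤ m ∧ (deriv (F^[n]) z) ^ m = 1

open Polynomial in
/-- Iterates as polynomials. -/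
noncomputable def GG {A : Type*} [CommRing A] (s t u : A) : ℕ → A[X]
  | 0 => X
  | k + 1 => (GG s t u k) ^ 3 - C s * GG s t u k + (C t + C u * X)

open Polynomial in
theorem GG_monic {A : Type*} [CommRing A] [Nontrivial A] (s t u : A) (k : ℕ) :
    (GG s t u k).Monic ∧ (GG s t u k).natDegree = 3 ^ k := by
  induction k with
  | zero => exact ⟨monic_X, by simp [GG]⟩
  | succ k ih =>
    obtain ⟨hm, hd⟩ := ih
    have hpos : 1 ≤ 3 ^ k := Nat.one_le_pow _ _ (by norm_num)
    have h3 : ((GG s t u k) ^ 3).natDegree = 3 ^ (k + 1) := by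
      rw [hm.natDegree_pow, hd]; ring
    have hlow : (- (C s * GG s t u k) + (C t + C u * X)).natDegree ≤ 3 ^ k := by
      refine natDegree_add_le_of_degree_le ?_ ?_
      · rw [natDegree_neg]
        exact (natDegree_C_mul_le _ _).trans hd.le
      · refine natDegree_add_le_of_degree_le (by simp) ?_
        exact ((natDegree_C_mul_le _ _).trans natDegree_X_le).trans hpos
    have hlt : (- (C s * GG s t u k) + (C t + C u * X)).natDegree
        < ((GG s t u k) ^ 3).natDegree := by
      rw [h3, pow_succ]; omega
    have e : GG s t u (k + 1)
        = (GG s t u k) ^ 3 + (- (C s * GG s t u k) + (C t + C u * X)) := by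
      rw [GG]; ring
    rw [e]
    exact ⟨(hm.pow 3).add_of_left (degree_lt_degree hlt),
      (natDegree_add_eq_left_of_natDegree_lt hlt).trans h3⟩

open Polynomial in
theorem v_integral {A : Type*} [CommRing A] [Nontrivial A] [Algebra A ℂ] (a : A) (v : ℂ)
    (k : ℕ) (h : (Fav (algebraMap A ℂ a) v)^[k + 1] (algebraMap A ℂ a) = algebraMap A ℂ a) :
    IsIntegral A v := by
  have hev : ∀ j, aeval v (GG (3 * a ^ 2) (2 * a ^ 3) 1 j)
      = (Fav (algebraMap A ℂ a) v)^[j] v := by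
    intro j
    induction j with
    | zero => simp [GG]
    | succ j ih =>
      rw [iterate_succ_apply', ← ih, GG]
      have e3 : algebraMap A ℂ 3 = 3 := map_ofNat _ 3
      have e2 : algebraMap A ℂ 2 = 2 := map_ofNat _ 2
      simp [Fav, e2, e3]
  obtain ⟨hm, hd⟩ := GG_monic (3 * a ^ 2) (2 * a ^ 3) 1 k
  refine ⟨GG (3 * a ^ 2) (2 * a ^ 3) 1 k - C a, ?_, ?_⟩
  · refine hm.sub_of_left ((degree_C_le).trans_lt ?_)
    rw [← natDegree_pos_iff_degree_pos, hd]; positivity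
  · rw [← aeval_def, map_sub, hev, aeval_C, sub_eq_zero]
    rw [iterate_succ_apply] at h
    have : Fav (algebraMap A ℂ a) v (algebraMap A ℂ a) = v := by simp [Fav]; ring
    rwa [this] at h

open Polynomial in
theorem z_integral {A : Type*} [CommRing A] [Nontrivial A] [Algebra A ℂ] (a v : A) (z : ℂ)
    (k : ℕ) (hk : 1 ≤ k) (h : (Fav (algebraMap A ℂ a) (algebraMap A ℂ v))^[k] z = z) :
    IsIntegral A z := by
  have hev : ∀ j, aeval z (GG (3 * a ^ 2) (2 * a ^ 3 + v) 0 j)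
      = (Fav (algebraMap A ℂ a) (algebraMap A ℂ v))^[j] z := by
    intro j
    induction j with
    | zero => simp [GG]
    | succ j ih =>
      rw [iterate_succ_apply', ← ih, GG]
      have e3 : algebraMap A ℂ 3 = 3 := map_ofNat _ 3
      have e2 : algebraMap A ℂ 2 = 2 := map_ofNat _ 2
      simp [Fav, e2, e3]
  obtain ⟨hm, hd⟩ := GG_monic (3 * a ^ 2) (2 * a ^ 3 + v) 0 k
  refine ⟨GG (3 * a ^ 2) (2 * a ^ 3 + v) 0 k - X, ?_, ?_⟩
  · refine hm.sub_of_left (degree_lt_degree ?_)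
    rw [hd, natDegree_X]
    exact Nat.one_lt_pow (by omega) (by norm_num)
  · rw [← aeval_def, map_sub, hev, aeval_X, h, sub_self]

theorem deriv_mem {R : Type*} [CommRing R] [Algebra R ℂ] (B : Subalgebra R ℂ) (a v z : ℂ)
    (ha : a ∈ B) (hv : v ∈ B) (hz : z ∈ B) (n : ℕ) :
    (Fav a v)^[n] z ∈ B ∧ ∃ w ∈ B, HasDerivAt ((Fav a v)^[n]) w z ∧
      (1 ≤ n → ∃ w' ∈ B, w = 3 * w') := by
  induction n with
  | zero => exact ⟨hz, 1, B.one_mem, hasDerivAt_id z, by simp⟩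
  | succ n ih =>
    obtain ⟨h1, w, hw, hd, -⟩ := ih
    have h3 : (3 : ℂ) ∈ B := by exact_mod_cast B.natCast_mem 3
    have h2 : (2 : ℂ) ∈ B := by exact_mod_cast B.natCast_mem 2
    set y := (Fav a v)^[n] z with hy
    have hF : HasDerivAt (Fav a v) (3 * (y ^ 2 - a ^ 2)) y := by
      have := (((hasDerivAt_id y).pow 3).sub ((hasDerivAt_id y).const_mul (3 * a ^ 2))).add_const
        (2 * a ^ 3 + v)
      refine this.congr_deriv ?_
      simp only [id]; push_cast; ring
    have hm : y ^ 2 - a ^ 2 ∈ B := B.sub_mem (B.pow_mem h1 2) (B.pow_mem ha 2)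
    refine ⟨?_, 3 * (y ^ 2 - a ^ 2) * w, B.mul_mem (B.mul_mem h3 hm) hw, ?_, fun _ =>
      ⟨(y ^ 2 - a ^ 2) * w, B.mul_mem hm hw, by ring⟩⟩
    · rw [iterate_succ_apply', ← hy]
      exact B.add_mem (B.sub_mem (B.pow_mem h1 3) (B.mul_mem (B.mul_mem h3 (B.pow_mem ha 2)) h1))
        (B.add_mem (B.mul_mem h2 (B.pow_mem ha 3)) hv)
    · rw [iterate_succ']
      exact hF.comp z hd

open Polynomial in
theorem a_algebraic (a v : ℂ) (k : ℕ) (h : (Fav a v)^[k + 1] a = a)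
    (hpar : HasParabolicCycle (Fav a v)) : IsAlgebraic ℤ a := by
  obtain ⟨z, n, hn, hz, m, hm, hd⟩ := hpar
  let R := Algebra.adjoin ℤ ({a} : Set ℂ)
  let B := integralClosure R ℂ
  let a' : R := ⟨a, Algebra.self_mem_adjoin_singleton ℤ a⟩
  have hv : IsIntegral R v := v_integral a' v k h
  have haB : a ∈ B := isIntegral_algebraMap (R := R) (x := a')
  have hzB : IsIntegral B z := z_integral (A := B) ⟨a, haB⟩ ⟨v, hv⟩ z n hn hz
  have hzR : z ∈ B := isIntegral_trans (R := R) z hzB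
  obtain ⟨-, w, hw, hdw, hw'⟩ := deriv_mem B a v z haB hv hzR n
  obtain ⟨w', hw'B, rfl⟩ := hw' hn
  rw [hdw.deriv] at hd
  have hu : IsUnit (algebraMap R B 3) := by
    refine IsUnit.of_mul_eq_one (⟨w', hw'B⟩ * (3 * ⟨w', hw'B⟩) ^ (m - 1) : B) ?_
    apply Subtype.ext
    obtain ⟨m, rfl⟩ := Nat.exists_eq_add_of_le' hm
    simp only [map_ofNat, Nat.add_sub_cancel]
    push_cast
    rw [← hd]
    change (3 : ℂ) * (w' * (3 * w') ^ m) = _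
    ring
  have hinj : Function.Injective (algebraMap R B) := fun x y hxy =>
    Subtype.ext (congrArg (fun b : B => (b : ℂ)) hxy)
  have hfs : FaithfulSMul R B := (faithfulSMul_iff_algebraMap_injective R B).2 hinj
  have hu3 : IsUnit (3 : R) := by
    have := Algebra.IsIntegral.isLocalHom R B
    exact isUnit_of_map_unit (algebraMap R B) 3 hu
  obtain ⟨r, hr⟩ := hu3.exists_right_inv
  obtain ⟨q, hq⟩ := (Algebra.adjoin_singleton_eq_range_aeval ℤ a ▸ r.2 :
    (r : ℂ) ∈ (aeval (R := ℤ) a).range)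
  refine ⟨3 * q - 1, ?_, ?_⟩
  · intro h0
    have := congrArg (fun p => p.coeff 0) h0
    have e : (3 * q : ℤ[X]) = C 3 * q := by simp
    simp only [e, coeff_sub, coeff_C_mul, coeff_one_zero, coeff_zero] at this
    omega
  · have h1 : (3 : ℂ) * (r : ℂ) = 1 := congrArg Subtype.val hr
    have hq' : aeval a q = (r : ℂ) := hq
    have e3 : aeval a (3 : ℤ[X]) = (3 : ℂ) := map_ofNat _ 3
    rw [map_sub, map_mul, hq', e3, h1, map_one, sub_self]

theorem stmt13 (p : ℕ) (hp : 1 ≤ p) :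
    {w ∈ Sper p | HasParabolicCycle (Fav w.1 w.2)}.Countable := by
  have hc : {x : ℂ | IsAlgebraic ℚ x}.Countable := Algebraic.countable ℚ ℂ
  refine (hc.prod hc).mono ?_
  rintro ⟨a, v⟩ ⟨⟨hper, -⟩, hpar⟩
  obtain ⟨k, rfl⟩ := Nat.exists_eq_add_of_le' hp
  have ha : IsAlgebraic ℚ a := (a_algebraic a v k hper hpar).extendScalars
    (RingHom.injective_int (algebraMap ℤ ℚ))
  let L := integralClosure ℚ ℂ
  have hv : IsIntegral L v := v_integral (A := L) ⟨a, ha.isIntegral⟩ v k hper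
  exact ⟨ha, (isIntegral_trans (R := ℚ) v hv).isAlgebraic⟩
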